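/- Let s > 1/2 and C₁, C₂ > 0. There exists a constant K > 0, depending only on s, C₁ and C₂, such that the following holds. Let d ≥ 4, 0 < σ ≤ C₁, F ∈ ℝ^{d×d} orthogonal, and for each class c ∈ {1, …, C} let ν_c = ∑_{k=1}^{K_c} π_{c,k} N(μ_{c,k}, σ² I_d) be a Gaussian mixture with π_{c,k} ≥ 0, ∑_k π_{c,k} = 1, class mean μ_c = ∑_k π_{c,k} μ_{c,k}, and suppose every mixture center satisfies the decay condition C₁ r^{−s} ≤ |(F μ_{c,k})^{(r)}| ≤ C₂ r^{−s} for all 1 ≤ r ≤ d. Let Φ(x) = Fᵀ ρ_t(F x) with soft-threshold λ = σ √(2 log d), let μ̄_c = ∫ Φ(x) dν_c(x), let Tr(Σ̄_W) = (1/C) ∑_c ∫ ‖Φ(x) − μ̄_c‖² dν_c(x), and let Tr(Σ_M) = (1/C) ∑_{c,k} π_{c,k} ‖μ_{c,k} − μ_c‖². Then Tr(Σ̄_W) ≤ 2 Tr(Σ_M) + K σ^{2 − 1/s} log d. -/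

import Mathlib

open Matrix MeasureTheory ProbabilityTheory

/-- The Gaussian measure `N(m, σ² I_d)` on `ℝ^d`, as a product of one-dimensional
Gaussian measures. -/
noncomputable def gaussPi (d : ℕ) (m : Fin d → ℝ) (σ : ℝ) : Measure (Fin d → ℝ) :=
  Measure.pi fun i => gaussianReal (m i) (Real.toNNReal (σ ^ 2))

/-- Soft-thresholding with threshold `lam`: `ρ_t(u) = sign(u) · max(|u| − lam, 0)`. -/
noncomputable def softThresh (lam u : ℝ) : ℝ :=
  Real.sign u * max (|u| - lam) 0

/-- `z` has sorted coefficients (by decreasing absolute value) satisfying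
`c₁ r^{−s} ≤ |z^{(r)}| ≤ c₂ r^{−s}` for all `1 ≤ r ≤ d` (here ranks are `0`-indexed,
so rank `r : Fin d` corresponds to `r + 1`). -/
def sortedDecay (s c₁ c₂ : ℝ) {d : ℕ} (z : Fin d → ℝ) : Prop :=
  ∃ e : Equiv.Perm (Fin d),
    (∀ r r' : Fin d, r ≤ r' → |z (e r')| ≤ |z (e r)|) ∧
    ∀ r : Fin d, c₁ * ((r : ℝ) + 1) ^ (-s) ≤ |z (e r)| ∧ |z (e r)| ≤ c₂ * ((r : ℝ) + 1) ^ (-s)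


lemma soft_eq {lam : ℝ} (hl : 0 ≤ lam) (u : ℝ) :
    softThresh lam u = max (u - lam) 0 - max (-u - lam) 0 := by
  unfold softThresh
  rcases lt_trichotomy u 0 with h | h | h
  · rw [Real.sign_of_neg h, abs_of_neg h, max_eq_right (a := u - lam) (by linarith)]; ring
  · subst h; simp
  · rw [Real.sign_of_pos h, abs_of_pos h, max_eq_right (a := -u - lam) (by linarith)]; ring

lemma soft_continuous {lam : ℝ} (hl : 0 ≤ lam) : Continuous (softThresh lam) := by
  have : softThresh lam = fun u => max (u - lam) 0 - max (-u - lam) 0 := funext (soft_eq hl)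
  rw [this]; fun_prop

lemma soft_sub_self {lam : ℝ} (hl : 0 ≤ lam) (u : ℝ) : |softThresh lam u - u| ≤ lam := by
  rw [soft_eq hl]
  rcases max_cases (u - lam) 0 with h | h <;> rcases max_cases (-u - lam) 0 with h' | h' <;>
    rw [abs_le] <;> constructor <;> linarith

lemma soft_abs_le {lam : ℝ} (hl : 0 ≤ lam) (u : ℝ) : |softThresh lam u| ≤ |u| := by
  rw [soft_eq hl]
  rcases max_cases (u - lam) 0 with h | h <;> rcases max_cases (-u - lam) 0 with h' | h' <;>
    rw [abs_le] <;> constructor <;> rcases abs_cases u with h'' | h'' <;> linarith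

lemma soft_lip {lam : ℝ} (hl : 0 ≤ lam) (u v : ℝ) :
    |softThresh lam u - softThresh lam v| ≤ |u - v| := by
  rw [soft_eq hl, soft_eq hl]
  rcases max_cases (u - lam) 0 with h | h <;> rcases max_cases (-u - lam) 0 with h' | h' <;>
  rcases max_cases (v - lam) 0 with k | k <;> rcases max_cases (-v - lam) 0 with k' | k' <;>
    rw [abs_le] <;> constructor <;> rcases abs_cases (u - v) with h'' | h'' <;> linarith

lemma sq_max_le_exp (u : ℝ) : (max u 0) ^ 2 ≤ 2 * Real.exp u := by
  rcases le_total u 0 with h | h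
  · rw [max_eq_right h]
    have := Real.exp_pos u
    nlinarith
  · rw [max_eq_left h]
    have := Real.quadratic_le_exp_of_nonneg h
    nlinarith

lemma soft_sq_le {lam t : ℝ} (hl : 0 ≤ lam) (ht : 0 < t) (u : ℝ) :
    softThresh lam u ^ 2 ≤ 2 / t ^ 2 * (Real.exp (t * (u - lam)) + Real.exp (t * (-u - lam))) := by
  have key : ∀ v : ℝ, (max v 0) ^ 2 ≤ 2 / t ^ 2 * Real.exp (t * v) := by
    intro v
    have h1 := sq_max_le_exp (t * v)
    have h2 : max (t * v) 0 = t * max v 0 := by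
      rw [mul_max_of_nonneg _ _ ht.le, mul_zero]
    rw [h2, mul_pow] at h1
    rw [div_mul_eq_mul_div, le_div_iff₀ (by positivity)]
    linarith
  have h1 := key (u - lam)
  have h2 := key (-u - lam)
  have h3 : 0 ≤ max (u - lam) 0 * max (-u - lam) 0 := by positivity
  rw [soft_eq hl, mul_add]
  nlinarith

lemma integral_exp_gauss (θ t lam : ℝ) (v : NNReal) :
    Integrable (fun y => Real.exp (t * (y - θ - lam))) (gaussianReal θ v) ∧
    ∫ y, Real.exp (t * (y - θ - lam)) ∂(gaussianReal θ v) = Real.exp (v * t ^ 2 / 2 - t * lam) := by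
  have h : (fun y => Real.exp (t * (y - θ - lam))) =
      fun y => Real.exp (-t * θ - t * lam) * Real.exp (t * y) := by
    funext y; rw [← Real.exp_add]; congr 1; ring
  rw [h]
  refine ⟨(integrable_exp_mul_gaussianReal t).const_mul _, ?_⟩
  rw [integral_const_mul]
  have := congrFun (mgf_id_gaussianReal (μ := θ) (v := v)) t
  simp only [mgf, id] at this
  rw [this, ← Real.exp_add]; congr 1; ring

lemma gauss_sq (θ : ℝ) (v : NNReal) :
    Integrable (fun y => (y - θ) ^ 2) (gaussianReal θ v) ∧
    ∫ y, (y - θ) ^ 2 ∂(gaussianReal θ v) = v := by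
  have hm : MemLp (fun y : ℝ => y - θ) 2 (gaussianReal θ v) :=
    (memLp_id_gaussianReal 2).sub (memLp_const θ)
  refine ⟨hm.integrable_sq, ?_⟩
  have := variance_id_gaussianReal (μ := θ) (v := v)
  rw [variance_eq_integral (by fun_prop)] at this
  simpa using this

lemma gauss_soft_memLp {lam : ℝ} (hl : 0 ≤ lam) (θ : ℝ) (v : NNReal) :
    MemLp (softThresh lam) 2 (gaussianReal θ v) :=
  (memLp_id_gaussianReal 2).mono (soft_continuous hl).aestronglyMeasurable
    (.of_forall fun u => by simpa using soft_abs_le hl u)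

lemma soft_risk {σ L D θ : ℝ} (hσ : 0 < σ) (hL : 1 ≤ L) (hD : Real.exp L = D) :
    ∫ y, (softThresh (σ * Real.sqrt (2 * L)) y - θ) ^ 2
      ∂(gaussianReal θ (Real.toNNReal (σ ^ 2))) ≤ 8 * L * min (θ ^ 2) (σ ^ 2) + 4 * σ ^ 2 / D := by
  have hDpos : 0 < D := hD ▸ Real.exp_pos _
  set lam := σ * Real.sqrt (2 * L) with hlam
  have hl : 0 < lam := by positivity
  have hlsq : lam ^ 2 = 2 * L * σ ^ 2 := by
    rw [hlam, mul_pow, Real.sq_sqrt (by linarith)]; ring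
  set v := Real.toNNReal (σ ^ 2) with hv
  have hvc : (v : ℝ) = σ ^ 2 := Real.coe_toNNReal _ (by positivity)
  have hIsq : Integrable (fun y => (softThresh lam y - θ) ^ 2) (gaussianReal θ v) :=
    ((gauss_soft_memLp hl.le θ v).sub (memLp_const θ)).integrable_sq
  -- bound a
  have ha : ∫ y, (softThresh lam y - θ) ^ 2 ∂(gaussianReal θ v) ≤ 2 * lam ^ 2 + 2 * σ ^ 2 := by
    obtain ⟨h1, h2⟩ := gauss_sq θ v
    calc _ ≤ ∫ y, (2 * lam ^ 2 + 2 * (y - θ) ^ 2) ∂(gaussianReal θ v) := by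
          refine integral_mono hIsq ((integrable_const _).add (h1.const_mul 2)) fun y => ?_
          have := sq_le_sq' (abs_le.1 (soft_sub_self hl.le y)).1 (abs_le.1 (soft_sub_self hl.le y)).2
          simp only
          nlinarith [sq_nonneg ((softThresh lam y - y) - (y - θ))]
      _ = _ := by
          rw [integral_add (integrable_const _) (h1.const_mul 2), integral_const_mul 2 (fun y => (y - θ) ^ 2), h2, hvc]; simp
  -- bound b
  set t := lam / σ ^ 2 with ht
  have htp : 0 < t := by positivity
  have ht2 : 2 / t ^ 2 = σ ^ 2 / L := by
    rw [ht, div_pow, hlsq]; field_simp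
  have hexp : Real.exp (v * t ^ 2 / 2 - t * lam) = 1 / D := by
    have : v * t ^ 2 / 2 - t * lam = - L := by
      have h1 : t * lam = 2 * L := by
        rw [ht, div_mul_eq_mul_div, ← sq, hlsq]; field_simp
      have h2 : v * t ^ 2 = t * lam := by rw [hvc, ht]; field_simp
      rw [h2, h1]; ring
    rw [this, Real.exp_neg, hD, one_div]
  have hb : ∫ y, (softThresh lam y - θ) ^ 2 ∂(gaussianReal θ v) ≤ 8 * θ ^ 2 + 4 * σ ^ 2 / D := by
    obtain ⟨h1, h2⟩ := integral_exp_gauss θ t lam v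
    obtain ⟨h3, h4⟩ := integral_exp_gauss θ (-t) (-lam) v
    calc _ ≤ ∫ y, (8 * θ ^ 2 + 2 * (2 / t ^ 2 * (Real.exp (t * (y - θ - lam)) +
            Real.exp (-t * (y - θ - -lam))))) ∂(gaussianReal θ v) := by
          refine integral_mono hIsq ((integrable_const _).add
            (((h1.add h3).const_mul _).const_mul _)) fun y => ?_
          have e1 := soft_sq_le hl.le htp (y - θ)
          have e2 := soft_lip hl.le y (y - θ)
          rw [sub_sub_cancel] at e2
          have e3 : (softThresh lam y - softThresh lam (y - θ)) ^ 2 ≤ θ ^ 2 := sq_le_sq.2 e2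
          have e4 : t * (-(y - θ) - lam) = -t * (y - θ - -lam) := by ring
          rw [e4] at e1
          simp only
          have e5 : (softThresh lam y - θ) ^ 2 ≤ 8 * θ ^ 2 + 2 * softThresh lam (y - θ) ^ 2 := by
            nlinarith [sq_nonneg ((softThresh lam y - softThresh lam (y - θ)) - θ - softThresh lam (y - θ)),
              sq_nonneg ((softThresh lam y - softThresh lam (y - θ)) + θ)]
          linarith
      _ = 8 * θ ^ 2 + 4 * (σ ^ 2 / D) / L := by
          have i5 : Integrable (fun y => 2 * (2 / t ^ 2 * (Real.exp (t * (y - θ - lam)) +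
            Real.exp (-t * (y - θ - -lam))))) (gaussianReal θ v) :=
            ((h1.add h3).const_mul _).const_mul _
          rw [integral_add (integrable_const _) i5]
          have i6 : ∫ y, 2 * (2 / t ^ 2 * (Real.exp (t * (y - θ - lam)) +
            Real.exp (-t * (y - θ - -lam)))) ∂(gaussianReal θ v) = 2 * (2 / t ^ 2 *
              (∫ y, Real.exp (t * (y - θ - lam)) ∂(gaussianReal θ v) +
              ∫ y, Real.exp (-t * (y - θ - -lam)) ∂(gaussianReal θ v))) := by
            rw [← integral_add h1 h3, ← integral_const_mul, ← integral_const_mul]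
          rw [i6, h2, h4]
          have : (v : ℝ) * (-t) ^ 2 / 2 - -t * -lam = v * t ^ 2 / 2 - t * lam := by ring
          rw [this, hexp, ht2]; simp; ring
      _ ≤ _ := by
          have : 4 * (σ ^ 2 / D) / L ≤ 4 * (σ ^ 2 / D) := div_le_self (by positivity) hL
          have e : 4 * σ ^ 2 / D = 4 * (σ ^ 2 / D) := by ring
          linarith
  have hp : 0 ≤ 4 * σ ^ 2 / D := by positivity
  rcases min_cases (θ ^ 2) (σ ^ 2) with h | h <;> rw [h.1]
  · nlinarith [sq_nonneg θ]
  · rw [hlsq] at ha; nlinarith [sq_nonneg σ]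

lemma gaussPi_prob (d : ℕ) (m : Fin d → ℝ) (σ : ℝ) : IsProbabilityMeasure (gaussPi d m σ) := by
  unfold gaussPi; infer_instance

lemma gaussPi_map {d : ℕ} (m a : Fin d → ℝ) (σ : ℝ) (ha : ∑ j, a j ^ 2 = 1) :
    (gaussPi d m σ).map (fun x => ∑ j, a j * x j) =
      gaussianReal (∑ j, a j * m j) (Real.toNNReal (σ ^ 2)) := by
  have hlaw : ∀ j, HasGaussianLaw (fun x : Fin d → ℝ => a j * x j) (gaussPi d m σ) := by
    intro j
    have h1 : HasLaw (fun x : Fin d → ℝ => x j) (gaussianReal (m j) (Real.toNNReal (σ ^ 2)))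
        (gaussPi d m σ) := 
      (measurePreserving_eval (fun i => gaussianReal (m i) (Real.toNNReal (σ ^ 2))) j).hasLaw
    exact h1.hasGaussianLaw.fun_smul (a j)
  have hind : iIndepFun (fun j (x : Fin d → ℝ) => a j * x j) (gaussPi d m σ) :=
    iIndepFun_pi (X := fun j (y : ℝ) => a j * y) (fun j => by fun_prop)
  have := gaussPi_prob d m σ
  rw [(hind.hasGaussianLaw_fun_sum hlaw).map_eq_gaussianReal]
  congr 1
  · rw [integral_finsetSum _ fun j _ => (hlaw j).integrable]
    refine Finset.sum_congr rfl fun j _ => ?_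
    rw [integral_const_mul]
    congr 1
    have := (measurePreserving_eval (fun i => gaussianReal (m i) (Real.toNNReal (σ ^ 2))) j)
    have h2 := this.hasLaw.integral_eq
    simp only [integral_id_gaussianReal] at h2
    exact h2
  · congr 1
    have h := variance_sum_pi (μ := fun i => gaussianReal (m i) (Real.toNNReal (σ ^ 2)))
      (X := fun j (y : ℝ) => a j * y) (fun j => (memLp_id_gaussianReal 2).const_mul (a j))
    have e : (∑ i, fun ω : Fin d → ℝ => a i * ω i) = fun ω => ∑ i, a i * ω i := by
      funext ω; simp
    rw [e] at h
    unfold gaussPi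
    rw [h]
    have e2 : ∀ i, Var[fun y => a i * y; gaussianReal (m i) (Real.toNNReal (σ ^ 2))]
        = a i ^ 2 * (Real.toNNReal (σ ^ 2) : ℝ) := fun i => by
      rw [variance_const_mul, variance_fun_id_gaussianReal]
    rw [Finset.sum_congr rfl fun i _ => e2 i, ← Finset.sum_mul, ha, one_mul, Real.coe_toNNReal _ (sq_nonneg _)]

lemma tail_term {p : ℝ} (hp : 0 < p) (n : ℕ) (hn : 1 ≤ n) :
    ((n : ℝ) + 1) ^ (-p - 1) ≤ 1 / p * ((n : ℝ) ^ (-p) - ((n : ℝ) + 1) ^ (-p)) := by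
  have hn0 : (0 : ℝ) < n := by exact_mod_cast hn
  have hn1 : (0 : ℝ) < (n : ℝ) + 1 := by linarith
  have e1 : (n : ℝ) ^ (-p) = ((n : ℝ) + 1) ^ (-p) * (n / ((n : ℝ) + 1)) ^ (-p) := by
    rw [← Real.mul_rpow hn1.le (by positivity)]; congr 1; field_simp
  have e2 : 1 + p / ((n : ℝ) + 1) ≤ (n / ((n : ℝ) + 1)) ^ (-p) := by
    have hq : 0 < (n : ℝ) / ((n : ℝ) + 1) := by positivity
    rw [Real.rpow_def_of_pos hq]
    have h1 := Real.add_one_le_exp (Real.log (n / ((n : ℝ) + 1)) * -p)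
    have h2 := Real.log_le_sub_one_of_pos hq
    have h3 : (n : ℝ) / ((n : ℝ) + 1) - 1 = - (1 / ((n : ℝ) + 1)) := by field_simp; ring
    rw [h3] at h2
    have h4 : p / ((n : ℝ) + 1) = p * (1 / ((n : ℝ) + 1)) := by ring
    rw [h4]
    nlinarith
  have e3 : ((n : ℝ) + 1) ^ (-p - 1) = ((n : ℝ) + 1) ^ (-p) / ((n : ℝ) + 1) := by
    rw [Real.rpow_sub hn1, Real.rpow_one]
  rw [e3, e1]
  have hpos : 0 < ((n : ℝ) + 1) ^ (-p) := by positivity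
  have : ((n : ℝ) + 1) ^ (-p) / ((n : ℝ) + 1) =
      1 / p * (((n : ℝ) + 1) ^ (-p) * (1 + p / ((n : ℝ) + 1)) - ((n : ℝ) + 1) ^ (-p)) := by
    field_simp; ring
  rw [this]
  gcongr

lemma min_sum_le {s c₂ σ : ℝ} (hs : 1 / 2 < s) (N : ℕ) (hN : 1 ≤ N) (d : ℕ) :
    ∑ r ∈ Finset.range d, min ((c₂ * ((r : ℝ) + 1) ^ (-s)) ^ 2) (σ ^ 2) ≤
      N * σ ^ 2 + c₂ ^ 2 / (2 * s - 1) * (N : ℝ) ^ (-(2 * s - 1)) := by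
  have hp : 0 < 2 * s - 1 := by linarith
  have small : ∀ d : ℕ, ∑ r ∈ Finset.range d, min ((c₂ * ((r : ℝ) + 1) ^ (-s)) ^ 2) (σ ^ 2) ≤
      d * σ ^ 2 := by
    intro d
    calc _ ≤ ∑ r ∈ Finset.range d, σ ^ 2 := Finset.sum_le_sum fun _ _ => min_le_right _ _
      _ = _ := by simp
  rcases le_total d N with h | h
  · refine (small d).trans ?_
    have : (d : ℝ) ≤ N := by exact_mod_cast h
    have h2 : 0 ≤ c₂ ^ 2 / (2 * s - 1) * (N : ℝ) ^ (-(2 * s - 1)) := by positivity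
    nlinarith [sq_nonneg σ]
  · have big : ∑ r ∈ Finset.range d, min ((c₂ * ((r : ℝ) + 1) ^ (-s)) ^ 2) (σ ^ 2) ≤
      N * σ ^ 2 + c₂ ^ 2 / (2 * s - 1) * ((N : ℝ) ^ (-(2 * s - 1)) - (d : ℝ) ^ (-(2 * s - 1))) := by
      induction d, h using Nat.le_induction with
      | base => simpa using small N
      | succ n hn ih =>
        rw [Finset.sum_range_succ]
        have h1 := tail_term hp n (hN.trans hn)
        have h2 : min ((c₂ * ((n : ℝ) + 1) ^ (-s)) ^ 2) (σ ^ 2) ≤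
            c₂ ^ 2 * ((n : ℝ) + 1) ^ (-(2 * s - 1) - 1) := by
          refine (min_le_left _ _).trans (le_of_eq ?_)
          rw [mul_pow, ← Real.rpow_natCast (((n : ℝ) + 1) ^ (-s)), ← Real.rpow_mul (by positivity)]
          congr 2; push_cast; ring
        have h3 := mul_le_mul_of_nonneg_left h1 (sq_nonneg c₂)
        push_cast
        have h4 : c₂ ^ 2 / (2 * s - 1) = c₂ ^ 2 * (1 / (2 * s - 1)) := by ring
        rw [h4] at ih ⊢
        nlinarith
    have : 0 ≤ c₂ ^ 2 / (2 * s - 1) * (d : ℝ) ^ (-(2 * s - 1)) := by positivity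
    linarith

lemma sigma_sq_le {s c₁ σ : ℝ} (hs : 1 / 2 < s) (hσ : 0 < σ) (hσ1 : σ ≤ c₁) :
    σ ^ 2 ≤ c₁ ^ (1 / s) * σ ^ (2 - 1 / s) := by
  have : σ ^ 2 = σ ^ (1 / s) * σ ^ (2 - 1 / s) := by
    rw [← Real.rpow_add hσ, ← Real.rpow_natCast]; congr 1; push_cast; ring
  rw [this]
  have : 0 < s := by linarith
  gcongr

lemma decay_sum {s c₁ c₂ σ : ℝ} (hs : 1 / 2 < s) (hσ : 0 < σ) (hσ1 : σ ≤ c₁) {d : ℕ}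
    {z : Fin d → ℝ} (hz : sortedDecay s c₁ c₂ z) :
    ∑ i, min (z i ^ 2) (σ ^ 2) ≤
      (1 + c₁ ^ (1 / s) + c₂ ^ 2 / (2 * s - 1)) * σ ^ (2 - 1 / s) := by
  obtain ⟨e, -, he⟩ := hz
  have hs0 : 0 < s := by linarith
  have hp : 0 < 2 * s - 1 := by linarith
  set N := ⌈σ ^ (-1 / s)⌉₊ with hN
  have hN1 : 1 ≤ N := Nat.one_le_ceil_iff.2 (by positivity)
  have hσr : 0 < σ ^ (-1 / s) := by positivity
  have hNle : (N : ℝ) ≤ σ ^ (-1 / s) + 1 := (Nat.ceil_lt_add_one hσr.le).le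
  have hNge : σ ^ (-1 / s) ≤ N := Nat.le_ceil _
  calc ∑ i, min (z i ^ 2) (σ ^ 2) = ∑ r, min (z (e r) ^ 2) (σ ^ 2) :=
        (Equiv.sum_comp e fun i => min (z i ^ 2) (σ ^ 2)).symm
    _ ≤ ∑ r : Fin d, min ((c₂ * ((r : ℝ) + 1) ^ (-s)) ^ 2) (σ ^ 2) := by
        refine Finset.sum_le_sum fun r _ => min_le_min_right _ ?_
        rw [← sq_abs (z (e r))]
        exact pow_le_pow_left₀ (abs_nonneg _) (he r).2 2
    _ = ∑ r ∈ Finset.range d, min ((c₂ * ((r : ℝ) + 1) ^ (-s)) ^ 2) (σ ^ 2) :=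
        Fin.sum_univ_eq_sum_range (fun r : ℕ => min ((c₂ * ((r : ℝ) + 1) ^ (-s)) ^ 2) (σ ^ 2)) d
    _ ≤ N * σ ^ 2 + c₂ ^ 2 / (2 * s - 1) * (N : ℝ) ^ (-(2 * s - 1)) := min_sum_le hs N hN1 d
    _ ≤ (σ ^ (-1 / s) + 1) * σ ^ 2 + c₂ ^ 2 / (2 * s - 1) * (σ ^ (-1 / s)) ^ (-(2 * s - 1)) := by
        have := Real.rpow_le_rpow_of_nonpos hσr hNge (z := -(2 * s - 1)) (by linarith)
        gcongr
    _ ≤ _ := by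
        have e1 : (σ ^ (-1 / s)) ^ (-(2 * s - 1)) = σ ^ (2 - 1 / s) := by
          rw [← Real.rpow_mul hσ.le]; congr 1; field_simp
        have e2 : σ ^ (-1 / s) * σ ^ 2 = σ ^ (2 - 1 / s) := by
          rw [← Real.rpow_natCast, ← Real.rpow_add hσ]; congr 1; push_cast; ring
        have e3 := sigma_sq_le hs hσ hσ1
        rw [e1, add_mul, e2]
        linarith

section
variable {d : ℕ}

lemma row_sq {F : Matrix (Fin d) (Fin d) ℝ} (hF : Fᵀ * F = 1) (i : Fin d) :
    ∑ j, F i j ^ 2 = 1 := by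
  have h : F * Fᵀ = 1 := mul_eq_one_comm.1 hF
  have := congrFun (congrFun h i) i
  simp only [Matrix.mul_apply, Matrix.transpose_apply, Matrix.one_apply_eq] at this
  rw [← this]
  exact Finset.sum_congr rfl fun j _ => sq _

lemma orth_norm {F : Matrix (Fin d) (Fin d) ℝ} (hF : Fᵀ * F = 1) (v : Fin d → ℝ) :
    ∑ i, (Fᵀ.mulVec v) i ^ 2 = ∑ i, v i ^ 2 := by
  have h : F * Fᵀ = 1 := mul_eq_one_comm.1 hF
  have e : ∀ u : Fin d → ℝ, ∑ i, u i ^ 2 = u ⬝ᵥ u := fun u => by simp [dotProduct, sq]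
  rw [e, e, Matrix.dotProduct_mulVec, Matrix.vecMul_transpose, Matrix.mulVec_mulVec, h,
    Matrix.one_mulVec]

lemma coord_map {F : Matrix (Fin d) (Fin d) ℝ} (hF : Fᵀ * F = 1) (m : Fin d → ℝ) (σ : ℝ)
    (i : Fin d) : MeasurePreserving (fun x => F.mulVec x i) (gaussPi d m σ)
      (gaussianReal (F.mulVec m i) (Real.toNNReal (σ ^ 2))) := by
  refine ⟨?_, ?_⟩
  · simp only [Matrix.mulVec, dotProduct]; fun_prop
  · simpa only [Matrix.mulVec, dotProduct] using gaussPi_map m (F i) σ (row_sq hF i)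

lemma coord_memLp {F : Matrix (Fin d) (Fin d) ℝ} (hF : Fᵀ * F = 1) (m : Fin d → ℝ) (σ : ℝ)
    {lam : ℝ} (hl : 0 ≤ lam) (i : Fin d) :
    MemLp (fun x => softThresh lam (F.mulVec x i)) 2 (gaussPi d m σ) :=
  (gauss_soft_memLp hl _ _).comp_measurePreserving (coord_map hF m σ i)

lemma phi_memLp {F : Matrix (Fin d) (Fin d) ℝ} (hF : Fᵀ * F = 1) (m : Fin d → ℝ) (σ : ℝ)
    {lam : ℝ} (hl : 0 ≤ lam) (i : Fin d) :
    MemLp (fun x => (Fᵀ.mulVec fun i => softThresh lam (F.mulVec x i)) i) 2 (gaussPi d m σ) := by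
  simp only [Matrix.mulVec, dotProduct]
  exact memLp_finsetSum _ fun j _ => (coord_memLp hF m σ hl j).const_mul _

lemma phi_measurable {F : Matrix (Fin d) (Fin d) ℝ}
    {lam : ℝ} (hl : 0 ≤ lam) (i : Fin d) :
    Measurable (fun x => (Fᵀ.mulVec fun i => softThresh lam (F.mulVec x i)) i) := by
  have := (soft_continuous hl).measurable
  simp only [Matrix.mulVec, dotProduct]
  fun_prop

lemma comp_risk {s c₁ c₂ σ : ℝ} (hs : 1 / 2 < s) (hσ : 0 < σ) (hσ1 : σ ≤ c₁)
    (hd : 4 ≤ d) {F : Matrix (Fin d) (Fin d) ℝ} (hF : Fᵀ * F = 1) (m : Fin d → ℝ)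
    (hm : sortedDecay s c₁ c₂ (F.mulVec m)) :
    ∫ x, ∑ i, ((Fᵀ.mulVec fun i =>
      softThresh (σ * Real.sqrt (2 * Real.log d)) (F.mulVec x i)) i - m i) ^ 2 ∂gaussPi d m σ ≤
    (8 * (1 + c₁ ^ (1 / s) + c₂ ^ 2 / (2 * s - 1)) + 4 * c₁ ^ (1 / s)) * σ ^ (2 - 1 / s)
      * Real.log d := by
  have := gaussPi_prob d m σ
  have hd4 : (4 : ℝ) ≤ d := by exact_mod_cast hd
  have hd0 : (0 : ℝ) < d := by linarith
  have hL : 1 ≤ Real.log d := by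
    rw [Real.le_log_iff_exp_le hd0]
    linarith [Real.exp_one_lt_d9]
  set L := Real.log d with hLdef
  have hexp : Real.exp L = d := Real.exp_log hd0
  set lam := σ * Real.sqrt (2 * L) with hlam
  have hl : 0 ≤ lam := by positivity
  have h1 : ∀ x : Fin d → ℝ, ∑ i, ((Fᵀ.mulVec fun i => softThresh lam (F.mulVec x i)) i - m i) ^ 2
      = ∑ i, (softThresh lam (F.mulVec x i) - F.mulVec m i) ^ 2 := by
    intro x
    rw [← orth_norm hF (fun i => softThresh lam (F.mulVec x i) - F.mulVec m i)]
    refine Finset.sum_congr rfl fun i _ => ?_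
    congr 1
    have e : (fun i => softThresh lam (F.mulVec x i) - F.mulVec m i) =
      (fun i => softThresh lam (F.mulVec x i)) - F.mulVec m := rfl
    rw [e, Matrix.mulVec_sub, Matrix.mulVec_mulVec, hF, Matrix.one_mulVec]; rfl
  simp_rw [h1]
  have hi : ∀ i, Integrable (fun x => (softThresh lam (F.mulVec x i) - F.mulVec m i) ^ 2)
      (gaussPi d m σ) := fun i =>
    ((coord_memLp hF m σ hl i).sub (memLp_const (F.mulVec m i))).integrable_sq
  rw [integral_finsetSum _ fun i _ => hi i]
  calc _ ≤ ∑ i, (8 * L * min (F.mulVec m i ^ 2) (σ ^ 2) + 4 * σ ^ 2 / d) := by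
        refine Finset.sum_le_sum fun i _ => ?_
        have hmp := coord_map hF m σ i
        have h2 := soft_risk (θ := F.mulVec m i) hσ hL hexp
        rw [← hmp.map_eq, integral_map hmp.measurable.aemeasurable] at h2
        · exact h2
        · have := soft_continuous hl
          exact Continuous.aestronglyMeasurable (by fun_prop)
    _ = 8 * L * ∑ i, min (F.mulVec m i ^ 2) (σ ^ 2) + 4 * σ ^ 2 := by
        rw [Finset.sum_add_distrib, Finset.mul_sum]
        simp
        field_simp
    _ ≤ _ := by
        have h3 := decay_sum hs hσ hσ1 hm
        have h4 := sigma_sq_le hs hσ hσ1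
        have h5 := mul_le_mul_of_nonneg_left h3 (show 0 ≤ 8 * L by linarith)
        have h6 : σ ^ 2 ≤ σ ^ 2 * L := le_mul_of_one_le_right (by positivity) hL
        have h7 := mul_le_mul_of_nonneg_right h4 (show 0 ≤ L by linarith)
        linarith

lemma mix_var {n : ℕ} {w : Fin n → ℝ} (hw : ∀ k, 0 ≤ w k) (hw1 : ∑ k, w k = 1)
    (P : Fin n → Measure (Fin d → ℝ)) (hP : ∀ k, IsProbabilityMeasure (P k))
    (f : (Fin d → ℝ) → Fin d → ℝ) (hf : ∀ i, Measurable (fun x => f x i))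
    (hf2 : ∀ k i, MemLp (fun x => f x i) 2 (P k)) (ν : Measure (Fin d → ℝ))
    (hν : ν = ∑ k, ENNReal.ofReal (w k) • P k) (a : Fin d → ℝ) :
    ∫ x, ∑ i, (f x i - (∫ x, f x ∂ν) i) ^ 2 ∂ν ≤
      ∑ k, w k * ∫ x, ∑ i, (f x i - a i) ^ 2 ∂(P k) := by
  have hprob : IsProbabilityMeasure ν := by
    constructor
    rw [hν]
    simp only [Measure.coe_finsetSum, Finset.sum_apply, Measure.smul_apply, measure_univ,
      smul_eq_mul, mul_one]
    rw [← ENNReal.ofReal_sum_of_nonneg fun k _ => hw k, hw1, ENNReal.ofReal_one]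
  have hInt : ∀ g : (Fin d → ℝ) → ℝ, (∀ k, Integrable g (P k)) → Integrable g ν := by
    intro g hg
    rw [hν, integrable_finsetSum_measure]
    exact fun k _ => (hg k).smul_measure ENNReal.ofReal_ne_top
  have hL2 : ∀ i, MemLp (fun x => f x i) 2 ν := fun i =>
    (memLp_two_iff_integrable_sq (hf i).aestronglyMeasurable).2
      (hInt _ fun k => (hf2 k i).integrable_sq)
  have hmean : ∀ i, (∫ x, f x ∂ν) i = ∫ x, f x i ∂ν := fun i =>
    eval_integral (fun i => (hL2 i).integrable (by norm_num)) i
  simp_rw [hmean]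
  have hi : ∀ i, Integrable (fun x => (f x i - ∫ x, f x i ∂ν) ^ 2) ν := fun i =>
    ((hL2 i).sub (memLp_const (∫ x, f x i ∂ν))).integrable_sq
  rw [integral_finsetSum _ fun i _ => hi i]
  have hsq : ∀ k i, Integrable (fun x => (f x i - a i) ^ 2) (P k) := fun k i =>
    ((hf2 k i).sub (memLp_const (a i))).integrable_sq
  calc _ ≤ ∑ i, ∫ x, (f x i - a i) ^ 2 ∂ν := by
        refine Finset.sum_le_sum fun i _ => ?_
        rw [← variance_eq_integral (hf i).aemeasurable,
          ← variance_sub_const (hf i).aestronglyMeasurable (a i)]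
        exact variance_le_expectation_sq ((hf i).sub_const _).aestronglyMeasurable
    _ = ∫ x, ∑ i, (f x i - a i) ^ 2 ∂ν :=
        (integral_finsetSum _ fun i _ => hInt _ fun k => hsq k i).symm
    _ = _ := by
        have hI : ∀ k, Integrable (fun x => ∑ i, (f x i - a i) ^ 2) (P k) := fun k =>
          integrable_finsetSum _ fun i _ => hsq k i
        rw [hν, integral_finsetSum_measure fun k _ => (hI k).smul_measure ENNReal.ofReal_ne_top]
        refine Finset.sum_congr rfl fun k _ => ?_
        rw [integral_smul_measure, ENNReal.toReal_ofReal (hw k), smul_eq_mul]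

lemma split_risk (P : Measure (Fin d → ℝ)) [IsProbabilityMeasure P]
    (f : (Fin d → ℝ) → Fin d → ℝ) (hf2 : ∀ i, MemLp (fun x => f x i) 2 P) (a b : Fin d → ℝ) :
    ∫ x, ∑ i, (f x i - a i) ^ 2 ∂P ≤
      2 * ∫ x, ∑ i, (f x i - b i) ^ 2 ∂P + 2 * ∑ i, (b i - a i) ^ 2 := by
  have hI : ∀ a : Fin d → ℝ, Integrable (fun x => ∑ i, (f x i - a i) ^ 2) P := fun a =>
    integrable_finsetSum _ fun i _ => ((hf2 i).sub (memLp_const (a i))).integrable_sq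
  calc _ ≤ ∫ x, (2 * ∑ i, (f x i - b i) ^ 2 + 2 * ∑ i, (b i - a i) ^ 2) ∂P := by
        refine integral_mono (hI a) (((hI b).const_mul 2).add (integrable_const _)) fun x => ?_
        simp only
        rw [Finset.mul_sum, Finset.mul_sum, ← Finset.sum_add_distrib]
        refine Finset.sum_le_sum fun i _ => ?_
        nlinarith [sq_nonneg ((f x i - b i) - (b i - a i))]
    _ = _ := by
        rw [integral_add ((hI b).const_mul 2) (integrable_const _), integral_const_mul]
        simp

end

/-- Within-class variance reduction.  For Gaussian mixture classes
`ν_c = ∑_k π_{c,k} N(μ_{c,k}, σ² I_d)` whose centers all satisfy the decay condition in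
the orthogonal basis `F`, the tight frame soft-thresholding `Φ(x) = Fᵀ ρ_t(F x)` with
`λ = σ √(2 log d)` satisfies `Tr(Σ̄_W) ≤ 2 Tr(Σ_M) + K σ^{2−1/s} log d`, where
`Tr(Σ̄_W) = (1/C) ∑_c ∫ ‖Φ(x) − μ̄_c‖² dν_c` and
`Tr(Σ_M) = (1/C) ∑_{c,k} π_{c,k} ‖μ_{c,k} − μ_c‖²`. -/
theorem within_class_variance_reduction
    (s c₁ c₂ : ℝ) (hs : 1 / 2 < s) (hc₁ : 0 < c₁) (hc₂ : 0 < c₂) :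
    ∃ K > 0, ∀ d : ℕ, 4 ≤ d → ∀ σ : ℝ, 0 < σ → σ ≤ c₁ →
      ∀ F : Matrix (Fin d) (Fin d) ℝ, Fᵀ * F = 1 →
      ∀ C : ℕ, 0 < C →
      ∀ (Kc : Fin C → ℕ) (w : (c : Fin C) → Fin (Kc c) → ℝ)
        (μmix : (c : Fin C) → Fin (Kc c) → Fin d → ℝ),
        (∀ c k, 0 ≤ w c k) → (∀ c, ∑ k, w c k = 1) →
        (∀ c k, sortedDecay s c₁ c₂ (F.mulVec (μmix c k))) →
      ∀ ν : Fin C → Measure (Fin d → ℝ),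
        (∀ c, ν c = ∑ k, ENNReal.ofReal (w c k) • gaussPi d (μmix c k) σ) →
      ∀ Φ : (Fin d → ℝ) → (Fin d → ℝ),
        Φ = (fun x => Fᵀ.mulVec fun i =>
          softThresh (σ * Real.sqrt (2 * Real.log d)) (F.mulVec x i)) →
      ∀ (μcl : Fin C → Fin d → ℝ), (∀ c, μcl c = ∑ k, w c k • μmix c k) →
      ∀ (μb : Fin C → Fin d → ℝ), (∀ c, μb c = ∫ x, Φ x ∂ν c) →
        (1 / C : ℝ) * ∑ c, ∫ x, ∑ i, (Φ x i - μb c i) ^ 2 ∂ν c ≤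
          2 * ((1 / C : ℝ) * ∑ c, ∑ k, w c k * ∑ i, (μmix c k i - μcl c i) ^ 2) +
            K * σ ^ (2 - 1 / s) * Real.log d := by
  have hs0 : 0 < s := by linarith
  have hp : 0 < 2 * s - 1 := by linarith
  refine ⟨2 * (8 * (1 + c₁ ^ (1 / s) + c₂ ^ 2 / (2 * s - 1)) + 4 * c₁ ^ (1 / s)),
    by positivity, ?_⟩
  intro d hd σ hσ hσ1 F hF C hC Kc w μmix hw hw1 hdec ν hν Φ hΦ μcl hμcl μb hμb
  set R := (8 * (1 + c₁ ^ (1 / s) + c₂ ^ 2 / (2 * s - 1)) + 4 * c₁ ^ (1 / s)) * σ ^ (2 - 1 / s)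
      * Real.log d with hR
  have hl : 0 ≤ σ * Real.sqrt (2 * Real.log d) := by positivity
  have hclass : ∀ c, ∫ x, ∑ i, (Φ x i - μb c i) ^ 2 ∂ν c ≤
      2 * ∑ k, w c k * ∑ i, (μmix c k i - μcl c i) ^ 2 + 2 * R := by
    intro c
    have hmem : ∀ k i, MemLp (fun x => Φ x i) 2 (gaussPi d (μmix c k) σ) := fun k i => by
      rw [hΦ]; exact phi_memLp hF _ _ hl i
    have hmeas : ∀ i, Measurable (fun x => Φ x i) := fun i => by
      rw [hΦ]; exact phi_measurable hl i
    rw [hμb c]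
    refine (mix_var (hw c) (hw1 c) (fun k => gaussPi d (μmix c k) σ)
      (fun k => gaussPi_prob _ _ _) Φ hmeas hmem (ν c) (hν c) (μcl c)).trans ?_
    calc _ ≤ ∑ k, w c k * (2 * R + 2 * ∑ i, (μmix c k i - μcl c i) ^ 2) := by
          refine Finset.sum_le_sum fun k _ => mul_le_mul_of_nonneg_left ?_ (hw c k)
          have := gaussPi_prob d (μmix c k) σ
          refine (split_risk _ Φ (hmem k) (μcl c) (μmix c k)).trans ?_
          have h := comp_risk hs hσ hσ1 hd hF _ (hdec c k)
          rw [hΦ]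
          linarith
      _ = _ := by
          simp_rw [mul_add, Finset.sum_add_distrib]
          rw [← Finset.sum_mul, hw1 c, one_mul, Finset.mul_sum, add_comm]
          congr 1
          exact Finset.sum_congr rfl fun k _ => by ring
  have hC0 : (0 : ℝ) < C := by exact_mod_cast hC
  calc _ ≤ (1 / C : ℝ) * ∑ c, (2 * ∑ k, w c k * ∑ i, (μmix c k i - μcl c i) ^ 2 + 2 * R) := by
        refine mul_le_mul_of_nonneg_left (Finset.sum_le_sum fun c _ => hclass c) (by positivity)
    _ = _ := by
        rw [Finset.sum_add_distrib, ← Finset.mul_sum]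
        simp only [Finset.sum_const, Finset.card_univ, Fintype.card_fin, nsmul_eq_mul]
        rw [hR]
        field_simp
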